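/- If g : (0,∞) → ℝ is convex and continuous, then the set K = cl{(u, v, W) ∈ ℝ × (0,∞) × 𝕊ᵈ_≻ : ζ(u, v, W) ≥ 0} (closure taken in ℝ × ℝ × 𝕊ᵈ) is a closed convex cone with nonempty interior: it is closed, closed under addition, closed under multiplication by nonnegative scalars, and its interior is nonempty. -/

import Mathlib

open Matrix

/-- `φ(W) = tr(g(W)) = ∑ᵢ g(λᵢ(W))` for a Hermitian (symmetric) matrix `W`. -/
noncomputable def phi {d : ℕ} (g : ℝ → ℝ) (W : Matrix (Fin d) (Fin d) ℝ) : ℝ :=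
  if h : W.IsHermitian then ∑ i, g (h.eigenvalues i) else 0

/-- `ζ(u, v, W) = u - v * φ(v⁻¹ W)`. -/
noncomputable def zeta {d : ℕ} (g : ℝ → ℝ) (u v : ℝ) (W : Matrix (Fin d) (Fin d) ℝ) : ℝ :=
  u - v * phi g (v⁻¹ • W)

/-- The space `𝕊ᵈ` of `d × d` real symmetric matrices, as the submodule of self-adjoint
matrices (over `ℝ`, self-adjoint means symmetric). -/
noncomputable abbrev SymMat (d : ℕ) : Submodule ℝ (Matrix (Fin d) (Fin d) ℝ) :=
  selfAdjoint.submodule ℝ (Matrix (Fin d) (Fin d) ℝ)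

/-!
The epigraph of a convex function `f`, placed at height `v = 1`, generates the cone of all
`(u, v, w)` with `0 < v`, `v⁻¹ • w ∈ dom f` and `v * f (v⁻¹ • w) ≤ u`. This cone is convex, and it
has interior as soon as `f` is continuous at an interior point of its domain. The set whose closure
is `K` is the cone of `f = φ`, so everything reduces to the convexity of `W ↦ tr (g W)`. In an
eigenbasis `eᵢ` of `a • A + b • B`, the eigenvalues are the convex combinations
`a * ⟪eᵢ, A eᵢ⟫ + b * ⟪eᵢ, B eᵢ⟫`, so Peierls' inequality `∑ᵢ g ⟪eᵢ, A eᵢ⟫ ≤ tr (g A)` concludes.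
Continuity of `φ` then comes for free, since a convex function on an open subset of a
finite-dimensional space is continuous.
-/

open Filter Topology

section Perspective

variable {E : Type*} [AddCommGroup E] [Module ℝ E] {s : Set E} {f : E → ℝ}

/-- The epigraph of `f` over `s`, placed at height `v = 1` in the space of triples `(u, v, w)`;
it generates the epigraph of the perspective `(v, w) ↦ v * f (v⁻¹ • w)` of `f` as a cone. -/
def liftedEpigraph (s : Set E) (f : E → ℝ) : Set (ℝ × ℝ × E) :=
  {p | p.2.1 = 1 ∧ p.2.2 ∈ s ∧ f p.2.2 ≤ p.1}

lemma convex_liftedEpigraph (hf : ConvexOn ℝ s f) : Convex ℝ (liftedEpigraph s f) := by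
  rintro ⟨u, v, x⟩ ⟨hv, hx, hu⟩ ⟨u', v', y⟩ ⟨hv', hy, hu'⟩ a b ha hb hab
  dsimp only at hv hx hu hv' hy hu'
  refine ⟨by simp [hv, hv', hab], hf.1 hx hy ha hb hab, (hf.2 hx hy ha hb hab).trans ?_⟩
  simp only [Prod.fst_add, Prod.smul_fst]
  gcongr

/-- The cone over `liftedEpigraph s f`, which for convex `f` is the epigraph of the perspective
of `f`. -/
noncomputable def perspectiveCone (s : Set E) (f : E → ℝ) : ConvexCone ℝ (ℝ × ℝ × E) :=
  ConvexCone.hull ℝ (liftedEpigraph s f)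

lemma mem_perspectiveCone (hf : ConvexOn ℝ s f) {p : ℝ × ℝ × E} :
    p ∈ perspectiveCone s f ↔
      0 < p.2.1 ∧ p.2.1⁻¹ • p.2.2 ∈ s ∧ p.2.1 * f (p.2.1⁻¹ • p.2.2) ≤ p.1 := by
  obtain ⟨u, v, w⟩ := p
  rw [perspectiveCone, ConvexCone.mem_hull_of_convex (convex_liftedEpigraph hf)]
  constructor
  · rintro ⟨c, hc, ⟨t, _, x⟩, ⟨rfl, hx, ht⟩, heq⟩
    simp only [Prod.smul_mk, Prod.mk.injEq, smul_eq_mul, mul_one] at heq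
    obtain ⟨rfl, rfl, rfl⟩ := heq
    simp only [inv_smul_smul₀ hc.ne']
    exact ⟨hc, hx, mul_le_mul_of_nonneg_left ht hc.le⟩
  · rintro ⟨hv, hw, hu⟩
    refine ⟨v, hv, (Set.mem_smul_set_iff_inv_smul_mem₀ hv.ne' _ _).2 ⟨?_, hw, ?_⟩⟩
    · exact inv_mul_cancel₀ hv.ne'
    · exact (le_inv_mul_iff₀ hv).2 hu

variable [TopologicalSpace E] [ContinuousSMul ℝ E]

lemma interior_perspectiveCone_nonempty (hf : ConvexOn ℝ s f) {x : E} (hx : s ∈ 𝓝 x)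
    (hfx : ContinuousAt f x) : (interior (perspectiveCone s f : Set (ℝ × ℝ × E))).Nonempty := by
  let p₀ : ℝ × ℝ × E := (f x + 1, 1, x)
  have hscale : Tendsto (fun p : ℝ × ℝ × E ↦ p.2.1⁻¹ • p.2.2) (𝓝 p₀) (𝓝 x) := by
    have : ContinuousAt (fun p : ℝ × ℝ × E ↦ p.2.1⁻¹ • p.2.2) p₀ := by
      fun_prop (disch := simp [p₀])
    simpa [ContinuousAt, p₀] using this
  have hperspective : ContinuousAt (fun p : ℝ × ℝ × E ↦ p.2.1 * f (p.2.1⁻¹ • p.2.2)) p₀ :=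
    ContinuousAt.mul (by fun_prop)
      (hfx.comp_of_eq (by fun_prop (disch := simp [p₀])) (by simp [p₀]))
  have hv : ∀ᶠ p in 𝓝 p₀, 0 < p.2.1 :=
    continuousAt_const.eventually_lt (by fun_prop) (by simp [p₀])
  have hu : ∀ᶠ p in 𝓝 p₀, p.2.1 * f (p.2.1⁻¹ • p.2.2) < p.1 :=
    hperspective.eventually_lt (by fun_prop) (by simp [p₀])
  refine ⟨p₀, mem_interior_iff_mem_nhds.2 ?_⟩
  filter_upwards [hv, hscale hx, hu] with p hv hw hu
  exact (mem_perspectiveCone hf).2 ⟨hv, hw, hu.le⟩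

end Perspective

lemma smul_mem_convexCone_closure {E : Type*} [AddCommGroup E] [Module ℝ E] [TopologicalSpace E]
    [ContinuousAdd E] [ContinuousSMul ℝ E] (C : ConvexCone ℝ E) {c : ℝ} (hc : 0 ≤ c) {x : E}
    (hx : x ∈ C.closure) : c • x ∈ C.closure := by
  obtain rfl | hc := hc.eq_or_lt
  · rw [zero_smul]
    exact ConvexCone.Pointed.of_nonempty_of_isClosed ⟨x, hx⟩ isClosed_closure
  · exact C.closure.smul_mem hc hx

section TraceFunction

variable {n 𝕜 : Type*} [Fintype n] [DecidableEq n] [RCLike 𝕜] {A B : Matrix n n 𝕜}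
  {s : Set ℝ} {g : ℝ → ℝ}

/-- The trace function `A ↦ tr (g A)`, with `g A` given by the continuous functional calculus. The
trace of a Hermitian matrix is real; `RCLike.re` only moves it from `𝕜` to `ℝ`. -/
noncomputable def traceCfc (g : ℝ → ℝ) (A : Matrix n n 𝕜) : ℝ :=
  RCLike.re (cfc g A).trace

lemma traceCfc_eq_sum_eigenvalues (hA : A.IsHermitian) (g : ℝ → ℝ) :
    traceCfc g A = ∑ i, g (hA.eigenvalues i) := by
  rw [traceCfc, hA.cfc_eq, IsHermitian.cfc, Unitary.conjStarAlgAut_apply, trace_mul_cycle,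
    Unitary.coe_star_mul_self, one_mul, trace_diagonal]
  simp

/-- The quadratic form `x ↦ xᴴ A x` of a Hermitian matrix `A`, whose values on unit vectors average
the eigenvalues of `A`. The real part is taken only to land in `ℝ`. -/
noncomputable def quadForm (A : Matrix n n 𝕜) (x : EuclideanSpace 𝕜 n) : ℝ :=
  RCLike.re (inner 𝕜 x (toEuclideanLin A x))

lemma quadForm_smul_add_smul (a b : ℝ) (A B : Matrix n n 𝕜) (x : EuclideanSpace 𝕜 n) :
    quadForm (a • A + b • B) x = a • quadForm A x + b • quadForm B x := by
  simp only [quadForm, RCLike.real_smul_eq_coe_smul (K := 𝕜), map_add, map_smul,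
    LinearMap.add_apply, LinearMap.smul_apply, inner_add_right, inner_smul_right,
    RCLike.re_ofReal_mul, smul_eq_mul]

lemma quadForm_eigenvectorBasis (hA : A.IsHermitian) (i : n) :
    quadForm A (hA.eigenvectorBasis i) = hA.eigenvalues i := by
  rw [hA.eigenvalues_eq, quadForm, EuclideanSpace.inner_eq_star_dotProduct, dotProduct_comm]
  rfl

lemma quadForm_eq_sum_eigenvalues (hA : A.IsHermitian) (x : EuclideanSpace 𝕜 n) :
    quadForm A x = ∑ j, ‖inner 𝕜 (hA.eigenvectorBasis j) x‖ ^ 2 * hA.eigenvalues j := by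
  have hinner (j : n) : inner 𝕜 (hA.eigenvectorBasis j) (toEuclideanLin A x) =
      hA.eigenvalues j * inner 𝕜 (hA.eigenvectorBasis j) x := by
    have heig : toEuclideanLin A (hA.eigenvectorBasis j) =
        (hA.eigenvalues j : 𝕜) • hA.eigenvectorBasis j := by
      rw [toLpLin_apply, hA.mulVec_eigenvectorBasis]
      ext k
      simp [RCLike.real_smul_eq_coe_mul]
    rw [← isSymmetric_toEuclideanLin_iff.2 hA, heig, inner_smul_left, RCLike.conj_ofReal]
  rw [quadForm, ← hA.eigenvectorBasis.sum_inner_mul_inner, map_sum]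
  refine Finset.sum_congr rfl fun j _ ↦ ?_
  rw [hinner, mul_left_comm, RCLike.re_ofReal_mul, ← inner_conj_symm x, RCLike.conj_mul, mul_comm]
  norm_cast

lemma quadForm_mem (hs : Convex ℝ s) (hA : A.IsHermitian) (hAs : spectrum ℝ A ⊆ s)
    {x : EuclideanSpace 𝕜 n} (hx : ‖x‖ = 1) : quadForm A x ∈ s := by
  rw [quadForm_eq_sum_eigenvalues hA]
  refine hs.sum_mem (fun _ _ ↦ sq_nonneg _) ?_ fun j _ ↦ hAs (hA.eigenvalues_mem_spectrum_real j)
  rw [hA.eigenvectorBasis.sum_sq_norm_inner_right, hx, one_pow]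

/-- **Peierls' inequality**: the weights `‖⟪eⱼ, bᵢ⟫‖ ^ 2` are doubly stochastic, so Jensen applies
for each `i`, and summing over `i` recovers the trace. -/
lemma sum_map_quadForm_le_traceCfc (hg : ConvexOn ℝ s g) (hA : A.IsHermitian)
    (hAs : spectrum ℝ A ⊆ s) (b : OrthonormalBasis n 𝕜 (EuclideanSpace 𝕜 n)) :
    ∑ i, g (quadForm A (b i)) ≤ traceCfc g A := by
  calc ∑ i, g (quadForm A (b i))
    _ ≤ ∑ i, ∑ j, ‖inner 𝕜 (hA.eigenvectorBasis j) (b i)‖ ^ 2 * g (hA.eigenvalues j) := by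
        refine Finset.sum_le_sum fun i _ ↦ ?_
        rw [quadForm_eq_sum_eigenvalues hA]
        refine hg.map_sum_le (fun _ _ ↦ sq_nonneg _) ?_
          fun j _ ↦ hAs (hA.eigenvalues_mem_spectrum_real j)
        rw [hA.eigenvectorBasis.sum_sq_norm_inner_right, b.norm_eq_one, one_pow]
    _ = ∑ j, g (hA.eigenvalues j) := by
        rw [Finset.sum_comm]
        refine Finset.sum_congr rfl fun j _ ↦ ?_
        rw [← Finset.sum_mul, b.sum_sq_norm_inner_left, OrthonormalBasis.norm_eq_one, one_pow,
          one_mul]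
    _ = traceCfc g A := (traceCfc_eq_sum_eigenvalues hA g).symm

lemma eigenvalues_smul_add_smul {a b : ℝ} (hC : (a • A + b • B).IsHermitian) (i : n) :
    hC.eigenvalues i =
      a • quadForm A (hC.eigenvectorBasis i) + b • quadForm B (hC.eigenvectorBasis i) := by
  rw [← quadForm_eigenvectorBasis, quadForm_smul_add_smul]

lemma convex_setOf_spectrum_subset (hs : Convex ℝ s) :
    Convex ℝ {A : selfAdjoint.submodule ℝ (Matrix n n 𝕜) | spectrum ℝ A.1 ⊆ s} := by
  intro A hA B hB a b ha hb hab
  have hC : (a • A.1 + b • B.1).IsHermitian := (a • A + b • B).2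
  change spectrum ℝ (a • A.1 + b • B.1) ⊆ s
  rw [hC.spectrum_real_eq_range_eigenvalues, Set.range_subset_iff]
  intro i
  have hnorm := hC.eigenvectorBasis.norm_eq_one i
  rw [eigenvalues_smul_add_smul]
  exact hs (quadForm_mem hs A.2 hA hnorm) (quadForm_mem hs B.2 hB hnorm) ha hb hab

/-- In an eigenbasis of `a • A + b • B`, convexity of the trace function reduces to Peierls'
inequality for `A` and for `B`. -/
lemma convexOn_traceCfc (hg : ConvexOn ℝ s g) :
    ConvexOn ℝ {A : selfAdjoint.submodule ℝ (Matrix n n 𝕜) | spectrum ℝ A.1 ⊆ s}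
      fun A ↦ traceCfc g A.1 := by
  refine ⟨convex_setOf_spectrum_subset hg.1, fun A hA B hB a b ha hb hab ↦ ?_⟩
  have hC : (a • A.1 + b • B.1).IsHermitian := (a • A + b • B).2
  let e := hC.eigenvectorBasis
  calc traceCfc g (a • A.1 + b • B.1)
    _ = ∑ i, g (a • quadForm A.1 (e i) + b • quadForm B.1 (e i)) := by
        simp only [traceCfc_eq_sum_eigenvalues hC, eigenvalues_smul_add_smul, e]
    _ ≤ ∑ i, (a • g (quadForm A.1 (e i)) + b • g (quadForm B.1 (e i))) :=
        Finset.sum_le_sum fun i _ ↦ hg.2 (quadForm_mem hg.1 A.2 hA (e.norm_eq_one i))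
          (quadForm_mem hg.1 B.2 hB (e.norm_eq_one i)) ha hb hab
    _ = a • ∑ i, g (quadForm A.1 (e i)) + b • ∑ i, g (quadForm B.1 (e i)) := by
        rw [Finset.sum_add_distrib, Finset.smul_sum, Finset.smul_sum]
    _ ≤ a • traceCfc g A.1 + b • traceCfc g B.1 := by
        gcongr
        · exact sum_map_quadForm_le_traceCfc hg A.2 hA e
        · exact sum_map_quadForm_le_traceCfc hg B.2 hB e

lemma isOpen_setOf_spectrum_subset (hs : IsOpen s) :
    IsOpen {A : Matrix n n 𝕜 | spectrum ℝ A ⊆ s} := by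
  -- Matrices carry no global norm; this one induces their product topology.
  let := Matrix.linftyOpNormedRing (n := n) (α := 𝕜)
  let := Matrix.linftyOpNormedAlgebra (n := n) (R := ℝ) (α := 𝕜)
  exact upperHemicontinuous_iff_isOpen_preimage_Iic.1
    (upperHemicontinuous_spectrum ℝ (Matrix n n 𝕜)) s hs

lemma continuousOn_traceCfc (hs : IsOpen s) (hg : ConvexOn ℝ s g) :
    ContinuousOn (fun A : selfAdjoint.submodule ℝ (Matrix n n 𝕜) ↦ traceCfc g A.1)
      {A | spectrum ℝ A.1 ⊆ s} := by
  have hopen : IsOpen {A : selfAdjoint.submodule ℝ (Matrix n n 𝕜) | spectrum ℝ A.1 ⊆ s} :=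
    (isOpen_setOf_spectrum_subset hs).preimage continuous_subtype_val
  let := Matrix.linftyOpNormedAddCommGroup (m := n) (n := n) (α := 𝕜)
  let := Matrix.linftyOpNormedSpace (m := n) (n := n) (R := ℝ) (α := 𝕜)
  exact (convexOn_traceCfc hg).continuousOn hopen

open scoped ComplexOrder in
lemma posDef_iff_spectrum_subset_Ioi (hA : A.IsHermitian) :
    A.PosDef ↔ spectrum ℝ A ⊆ Set.Ioi 0 := by
  simp only [hA.posDef_iff_eigenvalues_pos, hA.spectrum_real_eq_range_eigenvalues,
    Set.range_subset_iff, Set.mem_Ioi]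

open scoped ComplexOrder in
lemma posDef_iff_spectrum_inv_smul_subset_Ioi {v : ℝ} (hv : 0 < v) (hA : A.IsHermitian) :
    A.PosDef ↔ spectrum ℝ (v⁻¹ • A) ⊆ Set.Ioi 0 := by
  rw [← posDef_iff_spectrum_subset_Ioi (hA.smul (.all _))]
  exact ⟨fun h ↦ h.smul (inv_pos.2 hv), fun h ↦ by simpa [hv.ne'] using h.smul hv⟩

end TraceFunction

theorem K_closed_convex_cone_nonempty_interior_general {n 𝕜 : Type*} [Fintype n] [DecidableEq n]
    [RCLike 𝕜] {s : Set ℝ} {g : ℝ → ℝ} (hs : (interior s).Nonempty) (hg : ConvexOn ℝ s g) :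
    let K : Set (ℝ × ℝ × selfAdjoint.submodule ℝ (Matrix n n 𝕜)) := closure
      {p | 0 < p.2.1 ∧ spectrum ℝ (p.2.1⁻¹ • p.2.2.1) ⊆ s ∧
        p.2.1 * traceCfc g (p.2.1⁻¹ • p.2.2.1) ≤ p.1}
    IsClosed K ∧
    (∀ x ∈ K, ∀ y ∈ K, x + y ∈ K) ∧
    (∀ c : ℝ, 0 ≤ c → ∀ x ∈ K, c • x ∈ K) ∧
    (interior K).Nonempty := by
  intro K
  have hφ := convexOn_traceCfc (n := n) (𝕜 := 𝕜) hg
  let C := perspectiveCone {A : selfAdjoint.submodule ℝ (Matrix n n 𝕜) | spectrum ℝ A.1 ⊆ s}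
    fun A ↦ traceCfc g A.1
  have hK : K = C.closure := congrArg closure (Set.ext fun _ ↦ (mem_perspectiveCone hφ).symm)
  obtain ⟨t, ht⟩ := hs
  let T : selfAdjoint.submodule ℝ (Matrix n n 𝕜) := ⟨algebraMap ℝ _ t, .algebraMap _ (.all t)⟩
  have hT : {A : selfAdjoint.submodule ℝ (Matrix n n 𝕜) | spectrum ℝ A.1 ⊆ interior s} ∈ 𝓝 T :=
    ((isOpen_setOf_spectrum_subset isOpen_interior).preimage continuous_subtype_val).mem_nhds
      ((CFC.spectrum_algebraMap_subset t).trans (Set.singleton_subset_iff.2 ht))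
  have hcont := continuousOn_traceCfc (n := n) (𝕜 := 𝕜) isOpen_interior
    (hg.subset interior_subset hg.1.interior)
  rw [hK]
  refine ⟨isClosed_closure, fun x hx y hy ↦ C.closure.add_mem hx hy,
    fun c hc x hx ↦ smul_mem_convexCone_closure C hc hx, ?_⟩
  exact (interior_perspectiveCone_nonempty hφ
    (mem_of_superset hT fun _ hA ↦ hA.trans interior_subset)
    (hcont.continuousAt hT)).mono (interior_mono subset_closure)

lemma phi_eq_traceCfc {d : ℕ} (g : ℝ → ℝ) {W : Matrix (Fin d) (Fin d) ℝ} (hW : W.IsHermitian) :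
    phi g W = traceCfc g W := by
  rw [phi, dif_pos hW, traceCfc_eq_sum_eigenvalues hW]

lemma setOf_zeta_nonneg_eq_setOf_mul_traceCfc_le (d : ℕ) (g : ℝ → ℝ) :
    {p : ℝ × ℝ × SymMat d | 0 < p.2.1 ∧ (p.2.2 : Matrix (Fin d) (Fin d) ℝ).PosDef ∧
        0 ≤ zeta g p.1 p.2.1 (p.2.2 : Matrix (Fin d) (Fin d) ℝ)} =
      {p | 0 < p.2.1 ∧ spectrum ℝ (p.2.1⁻¹ • p.2.2.1) ⊆ Set.Ioi 0 ∧
        p.2.1 * traceCfc g (p.2.1⁻¹ • p.2.2.1) ≤ p.1} := by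
  ext p
  have hscaled : (p.2.1⁻¹ • p.2.2.1).IsHermitian := (p.2.1⁻¹ • p.2.2).2
  refine and_congr_right fun hv ↦ and_congr (posDef_iff_spectrum_inv_smul_subset_Ioi hv p.2.2.2) ?_
  rw [zeta, phi_eq_traceCfc g hscaled, sub_nonneg]

/-- If `g` is convex and continuous on `(0, ∞)`, the set
`K = cl {(u, v, W) ∈ ℝ × (0,∞) × 𝕊ᵈ_≻ : ζ(u, v, W) ≥ 0}` (closure in `ℝ × ℝ × 𝕊ᵈ`)
is a closed convex cone with nonempty interior. -/
theorem K_closed_convex_cone_nonempty_interior {d : ℕ} (g : ℝ → ℝ)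
    (hg_conv : ConvexOn ℝ (Set.Ioi (0 : ℝ)) g)
    (hg_cont : ContinuousOn g (Set.Ioi (0 : ℝ))) :
    let K : Set (ℝ × ℝ × SymMat d) := closure
      {p : ℝ × ℝ × SymMat d | 0 < p.2.1 ∧ (p.2.2 : Matrix (Fin d) (Fin d) ℝ).PosDef ∧
        0 ≤ zeta g p.1 p.2.1 (p.2.2 : Matrix (Fin d) (Fin d) ℝ)}
    IsClosed K ∧
    (∀ x ∈ K, ∀ y ∈ K, x + y ∈ K) ∧
    (∀ c : ℝ, 0 ≤ c → ∀ x ∈ K, c • x ∈ K) ∧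
    (interior K).Nonempty := by
  rw [setOf_zeta_nonneg_eq_setOf_mul_traceCfc_le]
  exact K_closed_convex_cone_nonempty_interior_general (by simp) hg_conv
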